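/- Let α be real with 0 < α < 2. Then the fractional centered-difference weights satisfy w_0^α = Γ(α+1)/Γ(α/2+1)² > 0 and w_k^α < 0 for every nonzero integer k, where w_k^α = (−1)^k Γ(α+1) / (Γ(α/2 − k + 1) Γ(α/2 + k + 1)). -/

import Mathlib

open Real

/-- The fractional centered-difference weights
`w_k^α = (−1)^k Γ(α+1) / (Γ(α/2 − k + 1) Γ(α/2 + k + 1))`. -/
noncomputable def fracWeight (α : ℝ) (k : ℤ) : ℝ :=
  (-1 : ℝ) ^ k * Real.Gamma (α + 1) /
    (Real.Gamma (α / 2 - k + 1) * Real.Gamma (α / 2 + k + 1))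

theorem fracWeight_gamma_aux (a : ℝ) (h0 : 0 < a) (h1 : a < 1) (n : ℕ) :
    0 < (-1 : ℝ) ^ n * Real.Gamma (a - n) := by
  induction n with
  | zero => simpa using Real.Gamma_pos_of_pos h0
  | succ n ih =>
    have hneg : a - ((n + 1 : ℕ) : ℝ) < 0 := by
      push_cast
      have : (0 : ℝ) ≤ n := n.cast_nonneg
      linarith
    have h := Real.Gamma_add_one hneg.ne
    have e : a - ((n + 1 : ℕ) : ℝ) + 1 = a - n := by push_cast; ring
    rw [e] at h
    rw [h] at ih
    rw [pow_succ]
    by_contra hc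
    push Not at hc
    nlinarith [mul_nonneg_of_nonpos_of_nonpos hc hneg.le]

theorem fracWeight_succ_neg (α : ℝ) (hα0 : 0 < α) (hα2 : α < 2) (n : ℕ) :
    fracWeight α ((n : ℤ) + 1) < 0 := by
  have h := fracWeight_gamma_aux (α / 2) (by linarith) (by linarith) n
  have hn : (0 : ℝ) ≤ n := n.cast_nonneg
  have hA := Real.Gamma_pos_of_pos (show 0 < α + 1 by linarith)
  have hB := Real.Gamma_pos_of_pos (show 0 < α / 2 + (n + 1) + 1 by linarith)
  have e : α / 2 - ((n : ℝ) + 1) + 1 = α / 2 - n := by ring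
  have hs : ((-1 : ℝ) ^ ((n : ℤ) + 1)) = -(-1) ^ n := by
    rw [zpow_add_one₀ (by norm_num), zpow_natCast]; ring
  unfold fracWeight
  push_cast
  rw [hs, e]
  rcases neg_one_pow_eq_or ℝ n with hp | hp
  · rw [hp] at h ⊢
    have hG : 0 < Real.Gamma (α / 2 - n) := by linarith
    exact div_neg_of_neg_of_pos (by linarith) (mul_pos hG hB)
  · rw [hp] at h ⊢
    have hG : Real.Gamma (α / 2 - n) < 0 := by linarith
    exact div_neg_of_pos_of_neg (by linarith) (mul_neg_of_neg_of_pos hG hB)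

theorem fracWeight_symm (α : ℝ) (k : ℤ) : fracWeight α (-k) = fracWeight α k := by
  unfold fracWeight
  have hs : ((-1 : ℝ) ^ (-k)) = (-1) ^ k := by
    rw [zpow_neg, ← inv_zpow]; norm_num
  rw [hs, mul_comm (Real.Gamma (α / 2 - k + 1))]
  push_cast
  rw [sub_neg_eq_add, ← sub_eq_add_neg]

/-- Let `α` be real with `0 < α < 2`. Then
`w_0^α = Γ(α+1)/Γ(α/2+1)² > 0` and `w_k^α < 0` for every nonzero integer `k`. -/
theorem fracWeight_signs (α : ℝ) (hα0 : 0 < α) (hα2 : α < 2) :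
    fracWeight α 0 = Real.Gamma (α + 1) / (Real.Gamma (α / 2 + 1)) ^ 2 ∧
    0 < fracWeight α 0 ∧
    ∀ k : ℤ, k ≠ 0 → fracWeight α k < 0 := by
  have h0 : fracWeight α 0 = Real.Gamma (α + 1) / (Real.Gamma (α / 2 + 1)) ^ 2 := by
    simp [fracWeight, pow_two]
  refine ⟨h0, ?_, ?_⟩
  · rw [h0]
    have hA := Real.Gamma_pos_of_pos (show 0 < α + 1 by linarith)
    have hB := Real.Gamma_pos_of_pos (show 0 < α / 2 + 1 by linarith)
    positivity
  · intro k hk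
    rcases lt_or_gt_of_ne hk with h | h
    · obtain ⟨n, hn⟩ := Int.eq_ofNat_of_zero_le (show 0 ≤ -k - 1 by omega)
      rw [← fracWeight_symm, show -k = (n : ℤ) + 1 by omega]
      exact fracWeight_succ_neg α hα0 hα2 n
    · obtain ⟨n, hn⟩ := Int.eq_ofNat_of_zero_le (show 0 ≤ k - 1 by omega)
      rw [show k = (n : ℤ) + 1 by omega]
      exact fracWeight_succ_neg α hα0 hα2 n
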